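/- arXiv:1702.07172 — 2 statements merged into one kernel-verified Lean document; each statement's English description precedes it below -/
import Mathlib

section
/- There exists a constant α > 0 such that for every integer d ≥ 2, every natural number n with n ≥ 12d², and every randomized online coloring algorithm (ι, μ, (A i)) on n-vertex graphs, there exists a chordal simple graph G on Fin n with chromatic number χ(G) = d such that the expected number of colors used on G, namely ∑' i, (μ i)·(number of colors used by A i on G), is at least α·d·log n, where log is the base-2 logarithm. -/
/-! By Yao's principle it suffices to find a random graph on which every deterministic online
algorithm uses `Ω(d log n)` colors in expectation.

Put `m = ⌊d / 2⌋` and let the vertices arrive in blocks of `m`, each of them a clique. Blocks carry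
a forest structure in which parents arrive after their children, and a block is completely joined
to its parent. A random forest of level `k + 1` consists of two independent random forests of level
`k`, built in succession, and one further block `v`. With probability `1 / 2` the block `v` is
isolated and the distinguished roots of both forests remain distinguished; otherwise `v` becomes the
parent of the roots of the first forest, and the roots of the second forest together with `v` are
distinguished. Let `X`, `Y` be the color sets of the roots of the two forests and `Z` the color set
of `v` in the second case. Then `Z` is disjoint from `X`, and counting gives
`(|X ∪ Y| + |Y ∪ Z|) / 2 ≥ |X| / 4 + 3 |Y| / 4 + m / 4` (`card_gain`). As the algorithm does not
know the coin when it colors the two forests, the expected number of root colors is at least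
`m + k m / 4` at level `k` (`forestExp_colors`), and level `k` needs only `m (2 ^ (k + 1) - 1)`
vertices. Since `n ≥ d ^ 2`, the level can be chosen to be of order `log (n / d) ≥ (log n) / 2`.

The later neighbors of a vertex lie in its own block and in the parent of that block, so they form a
clique; hence the graph is chordal. Coloring the blocks by depth parity uses `2 m ≤ d` colors, and
the last `d` vertices form a separate clique which makes the chromatic number exactly `d`. -/

/-- The number of colors used by an online algorithm `A` on the graph `G`. -/
def colorsUsed {n : ℕ} (A : Fin n → SimpleGraph (Fin n) → ℕ)
    (G : SimpleGraph (Fin n)) : ℕ :=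
  (Finset.univ.image fun v => A v G).card

/-- `A` is a deterministic online coloring algorithm on `n`-vertex graphs:
its decision at time `t` depends only on the graph induced on the vertices `≤ t`,
and the produced coloring is always proper. -/
def IsOnlineAlg {n : ℕ} (A : Fin n → SimpleGraph (Fin n) → ℕ) : Prop :=
  (∀ (t : Fin n) (G G' : SimpleGraph (Fin n)),
      (∀ u v : Fin n, u ≤ t → v ≤ t → (G.Adj u v ↔ G'.Adj u v)) → A t G = A t G') ∧
  ∀ (G : SimpleGraph (Fin n)) (u v : Fin n), G.Adj u v → A u G ≠ A v G

/-- A closed walk has a chord: an edge of the graph joining two vertices of the walk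
that are not consecutive on it (i.e. the edge is not an edge of the walk). -/
def SimpleGraph.Walk.HasChord {V : Type*} {G : SimpleGraph V} {v : V}
    (p : G.Walk v v) : Prop :=
  ∃ x y, x ∈ p.support ∧ y ∈ p.support ∧ G.Adj x y ∧ s(x, y) ∉ p.edges

/-- A graph is chordal if every cycle of length at least 4 has a chord. -/
def SimpleGraph.IsChordal {V : Type*} (G : SimpleGraph V) : Prop :=
  ∀ ⦃v : V⦄ (p : G.Walk v v), p.IsCycle → 4 ≤ p.length → p.HasChord

/-! ### The random parent function -/

/-- Number of blocks in the random forest of level `k`, i.e. `2 ^ (k + 1) - 1`. -/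
def blockCount : ℕ → ℕ
  | 0 => 1
  | k + 1 => 2 * blockCount k + 1

/-- Make `v` the parent of all blocks in `R`. -/
def attach (p : ℕ → ℕ) (R : Finset ℕ) (v : ℕ) : ℕ → ℕ :=
  fun b => if b ∈ R then v else p b

/-- Expectation of `F p' R` over the random forest of level `k` built on the blocks
`s, …, s + blockCount k - 1`, given the parent function `p` of the blocks before `s`. Here `p'` is
the resulting parent function and `R` the set of distinguished roots; a block without a parent
is a fixed point of the parent function. Two forests of level `k - 1`, with root sets `R₁` and
`R₂`, are built in succession and a fair coin decides whether the last block `v` stays isolated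
(roots `R₁ ∪ R₂`) or becomes the parent of `R₁` (roots `R₂ ∪ {v}`). -/
noncomputable def forestExp :
    ℕ → ℕ → (ℕ → ℕ) → ((ℕ → ℕ) → Finset ℕ → ℝ) → ℝ
  | 0, s, p, F => F p {s}
  | k + 1, s, p, F =>
    forestExp k s p fun p₁ R₁ => forestExp k (s + blockCount k) p₁ fun p₂ R₂ =>
      (F p₂ (R₁ ∪ R₂) + F (attach p₂ R₁ (s + 2 * blockCount k))
        (insert (s + 2 * blockCount k) R₂)) / 2

/-- The parent function `p` only involves blocks before `s`. -/
structure Fresh (s : ℕ) (p : ℕ → ℕ) : Prop where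
  new : ∀ b, s ≤ b → p b = b
  old : ∀ b, b < s → b ≤ p b ∧ p b < s

/-- `(p', R)` is an admissible outcome of building a forest on the blocks `s, …, e - 1`,
starting from `p`: `R` consists of parentless blocks among them, and only the parents of these
blocks are changed. -/
structure Outcome (s e : ℕ) (p p' : ℕ → ℕ) (R : Finset ℕ) : Prop where
  root : ∀ b ∈ R, s ≤ b ∧ b < e ∧ p' b = b
  keep : ∀ b, b < s → p' b = p b
  fresh : Fresh e p'

lemma Outcome.union {s e₁ e₂ e : ℕ} {p p₁ p₂ : ℕ → ℕ} {R₁ R₂ : Finset ℕ}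
    (h₁ : Outcome s e₁ p p₁ R₁) (h₂ : Outcome e₁ e₂ p₁ p₂ R₂)
    (hs : s ≤ e₁) (he : e₁ ≤ e₂) (hee : e₂ ≤ e) : Outcome s e p p₂ (R₁ ∪ R₂) where
  root b hb := by
    rcases Finset.mem_union.1 hb with hb | hb
    · have := h₁.root b hb
      have := h₂.keep b this.2.1
      omega
    · have := h₂.root b hb
      omega
  keep b hb := by rw [h₂.keep b (by omega), h₁.keep b hb]
  fresh :=
    { new := fun b hb => h₂.fresh.new b (by omega)
      old := fun b hb => by
        by_cases h : b < e₂
        · have := h₂.fresh.old b h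
          omega
        · have := h₂.fresh.new b (by omega)
          omega }

lemma Outcome.attach {s e₁ v : ℕ} {p p₁ p₂ : ℕ → ℕ} {R₁ R₂ : Finset ℕ}
    (h₁ : Outcome s e₁ p p₁ R₁) (h₂ : Outcome e₁ v p₁ p₂ R₂)
    (hs : s ≤ e₁) (he : e₁ ≤ v) :
    Outcome s (v + 1) p (attach p₂ R₁ v) (insert v R₂) where
  root b hb := by
    have hR : b ∉ R₁ := fun h => by
      have := h₁.root b h
      rcases Finset.mem_insert.1 hb with hb | hb
      · omega
      · have := h₂.root b hb
        omega
    simp only [_root_.attach, hR, if_false]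
    rcases Finset.mem_insert.1 hb with hb | hb
    · have := h₂.fresh.new b (by omega)
      omega
    · have := h₂.root b hb
      omega
  keep b hb := by
    have hR : b ∉ R₁ := fun h => by
      have := h₁.root b h
      omega
    simp only [_root_.attach, hR, if_false]
    rw [h₂.keep b (by omega), h₁.keep b hb]
  fresh :=
    { new := fun b hb => by
        have hR : b ∉ R₁ := fun h => by
          have := h₁.root b h
          omega
        simp only [_root_.attach, hR, if_false]
        exact h₂.fresh.new b (by omega)
      old := fun b hb => by
        by_cases hR : b ∈ R₁
        · simp only [_root_.attach, hR, if_true]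
          omega
        · simp only [_root_.attach, hR, if_false]
          by_cases h : b < v
          · have := h₂.fresh.old b h
            omega
          · have := h₂.fresh.new b (by omega)
            omega }

/-- Some outcome is at least as good as the expectation. -/
lemma exists_forestExp_le (k : ℕ) : ∀ (s : ℕ) (p : ℕ → ℕ) (F : (ℕ → ℕ) → Finset ℕ → ℝ),
    Fresh s p → ∃ p' R, Outcome s (s + blockCount k) p p' R ∧ forestExp k s p F ≤ F p' R := by
  induction k with
  | zero =>
    intro s p F hp
    refine ⟨p, {s}, ⟨?_, fun _ _ => rfl, ⟨?_, ?_⟩⟩, le_rfl⟩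
    · intro b hb
      have hb := Finset.mem_singleton.1 hb
      have := hp.new b hb.ge
      simp only [blockCount]
      omega
    · intro b hb
      exact hp.new b (by omega)
    · intro b hb
      simp only [blockCount] at *
      by_cases h : b < s
      · have := hp.old b h
        omega
      · have := hp.new b (by omega)
        omega
  | succ k ih =>
    intro s p F hp
    obtain ⟨p₁, R₁, h₁, hF₁⟩ := ih s p (fun p₁ R₁ => forestExp k (s + blockCount k) p₁
      fun p₂ R₂ => (F p₂ (R₁ ∪ R₂) + F (attach p₂ R₁ (s + 2 * blockCount k))
        (insert (s + 2 * blockCount k) R₂)) / 2) hp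
    obtain ⟨p₂, R₂, h₂, hF₂⟩ := ih (s + blockCount k) p₁ (fun p₂ R₂ =>
      (F p₂ (R₁ ∪ R₂) + F (attach p₂ R₁ (s + 2 * blockCount k))
        (insert (s + 2 * blockCount k) R₂)) / 2) h₁.fresh
    have hE : s + blockCount k + blockCount k = s + 2 * blockCount k := by ring
    have hE' : s + blockCount (k + 1) = s + 2 * blockCount k + 1 := by
      simp only [blockCount]; ring
    rw [hE] at h₂
    have hle := hF₁.trans hF₂
    rcases le_total (F p₂ (R₁ ∪ R₂)) (F (attach p₂ R₁ (s + 2 * blockCount k))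
        (insert (s + 2 * blockCount k) R₂)) with h | h
    · refine ⟨_, _, hE' ▸ h₁.attach h₂ (by omega) (by omega), ?_⟩
      simp only [forestExp]
      linarith
    · refine ⟨_, _, h₁.union h₂ (by omega) (by omega) (by omega), ?_⟩
      simp only [forestExp]
      linarith

lemma forestExp_linear (k : ℕ) : ∀ (s : ℕ) (p : ℕ → ℕ) (a b : ℝ)
    (F G : (ℕ → ℕ) → Finset ℕ → ℝ),
    forestExp k s p (fun q R => a * F q R + b * G q R)
      = a * forestExp k s p F + b * forestExp k s p G := by
  induction k with
  | zero => intros; rfl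
  | succ k ih =>
    intro s p a b F G
    simp only [forestExp]
    rw [← ih]
    congr 1
    funext p₁ R₁
    rw [← ih]
    congr 1
    funext p₂ R₂
    ring

lemma forestExp_const (k : ℕ) : ∀ (s : ℕ) (p : ℕ → ℕ) (c : ℝ),
    forestExp k s p (fun _ _ => c) = c := by
  induction k with
  | zero => intros; rfl
  | succ k ih =>
    intro s p c
    simp only [forestExp, ih]
    ring

lemma forestExp_mono {k s : ℕ} {p : ℕ → ℕ} (hp : Fresh s p) {F G : (ℕ → ℕ) → Finset ℕ → ℝ}
    (h : ∀ p' R, Outcome s (s + blockCount k) p p' R → F p' R ≤ G p' R) :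
    forestExp k s p F ≤ forestExp k s p G := by
  obtain ⟨p', R, ho, hle⟩ := exists_forestExp_le k s p (fun q R => 1 * F q R + (-1) * G q R) hp
  rw [forestExp_linear] at hle
  linarith [h p' R ho]

lemma hasSum_forestExp {ι : Type*} (k : ℕ) : ∀ (s : ℕ) (p : ℕ → ℕ)
    (f : ι → (ℕ → ℕ) → Finset ℕ → ℝ) (F : (ℕ → ℕ) → Finset ℕ → ℝ),
    (∀ q R, HasSum (fun i => f i q R) (F q R)) →
    HasSum (fun i => forestExp k s p (f i)) (forestExp k s p F) := by
  induction k with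
  | zero => exact fun s p f F h => h p {s}
  | succ k ih =>
    intro s p f F h
    exact ih _ _ _ _ fun p₁ R₁ => ih _ _ _ _ fun p₂ R₂ => ((h _ _).add (h _ _)).div_const 2

/-! ### The expected number of root colors -/

/-- The gain of one merging step. -/
lemma card_gain (X Y Z : Finset ℕ) (m : ℕ) (hXZ : Disjoint X Z) (hZ : m ≤ Z.card) :
    (X.card : ℝ) / 4 + 3 * Y.card / 4 + m / 4
      ≤ (((X ∪ Y).card : ℝ) + ((Z ∪ Y).card : ℝ)) / 2 := by
  have h₁ : (X \ Y).card + Y.card = (X ∪ Y).card := Finset.card_sdiff_add_card X Y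
  have h₂ : (Z \ Y).card + Y.card = (Z ∪ Y).card := Finset.card_sdiff_add_card Z Y
  have h₃ : (X \ Y).card + (X ∩ Y).card = X.card := Finset.card_sdiff_add_card_inter X Y
  have h₄ : (Z \ Y).card + (Z ∩ Y).card = Z.card := Finset.card_sdiff_add_card_inter Z Y
  have h₅ : (X ∩ Y).card + (Z ∩ Y).card ≤ Y.card := by
    rw [← Finset.card_union_of_disjoint
      (hXZ.mono Finset.inter_subset_left Finset.inter_subset_left)]
    exact Finset.card_le_card (Finset.union_subset Finset.inter_subset_right
      Finset.inter_subset_right)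
  have h : X.card + 3 * Y.card + m ≤ 2 * ((X ∪ Y).card + (Z ∪ Y).card) := by omega
  have h' : (X.card : ℝ) + 3 * Y.card + m ≤ 2 * ((X ∪ Y).card + (Z ∪ Y).card) := by
    exact_mod_cast h
  linarith

/-- The expected number of root colors grows by at least `m / 4` per level. Here `col p b`
stands for the set of colors which a deterministic online algorithm uses on block `b` of the graph
with parent function `p`. -/
lemma forestExp_colors {m M : ℕ} (col : (ℕ → ℕ) → ℕ → Finset ℕ)
    (hcard : ∀ p b, b < M → m ≤ (col p b).card)
    (hdisj : ∀ p b, p b ≠ b → Disjoint (col p b) (col p (p b)))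
    (honl : ∀ p p' t, (∀ b b', b ≤ t → b' ≤ t → b ≠ b' → (p b = b' ↔ p' b = b')) →
      col p t = col p' t) (k : ℕ) :
    ∀ (s : ℕ) (p : ℕ → ℕ), Fresh s p → s + blockCount k ≤ M →
      (m : ℝ) + k * m / 4 ≤ forestExp k s p (fun q R => ((R.biUnion (col q)).card : ℝ)) := by
  induction k with
  | zero =>
    intro s p _ hM
    simp only [forestExp, Finset.singleton_biUnion, blockCount] at *
    have := hcard p s (by omega)
    have : (m : ℝ) ≤ (col p s).card := by exact_mod_cast this
    simpa using this
  | succ k ih =>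
    intro s p hp hM
    simp only [blockCount] at hM
    have key : ∀ p₁ R₁, Outcome s (s + blockCount k) p p₁ R₁ →
        (1 / 4 : ℝ) * ((R₁.biUnion (col p₁)).card : ℝ)
            + 1 * (3 / 4 * ((m : ℝ) + k * m / 4) + m / 4)
          ≤ forestExp k (s + blockCount k) p₁ fun p₂ R₂ =>
            ((((R₁ ∪ R₂).biUnion (col p₂)).card : ℝ) +
              (((insert (s + 2 * blockCount k) R₂).biUnion
                (col (attach p₂ R₁ (s + 2 * blockCount k)))).card : ℝ)) / 2 := by
      intro p₁ R₁ h₁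
      have step : forestExp k (s + blockCount k) p₁ (fun p₂ R₂ =>
          (3 / 4 : ℝ) * ((R₂.biUnion (col p₂)).card : ℝ)
            + 1 * ((fun _ _ => ((R₁.biUnion (col p₁)).card : ℝ) / 4 + m / 4 :
                (ℕ → ℕ) → Finset ℕ → ℝ) p₂ R₂)) ≤ _ :=
        forestExp_mono h₁.fresh (G := fun p₂ R₂ =>
            ((((R₁ ∪ R₂).biUnion (col p₂)).card : ℝ) +
              (((insert (s + 2 * blockCount k) R₂).biUnion
                (col (attach p₂ R₁ (s + 2 * blockCount k)))).card : ℝ)) / 2) (by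
          intro p₂ R₂ h₂
          have hE : s + blockCount k + blockCount k = s + 2 * blockCount k := by ring
          rw [hE] at h₂
          set v := s + 2 * blockCount k with hv
          -- The algorithm cannot see the new edges before block `v` arrives.
          have hold : ∀ b, b < v → col (attach p₂ R₁ v) b = col p₂ b := by
            intro b hb
            refine honl _ _ _ fun c c' hc hc' hne => ?_
            by_cases hR : c ∈ R₁
            · have a₁ := h₁.root c hR
              have a₂ := h₂.keep c a₁.2.1
              simp only [attach, hR, if_true]
              omega
            · simp only [attach, hR, if_false]
          have hX : R₁.biUnion (col p₂) = R₁.biUnion (col p₁) := by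
            refine Finset.biUnion_congr rfl fun b hb => honl _ _ _ fun c c' hc hc' hne => ?_
            have a₁ := h₁.root b hb
            rw [h₂.keep c (by omega)]
          have hY : R₂.biUnion (col (attach p₂ R₁ v)) = R₂.biUnion (col p₂) := by
            refine Finset.biUnion_congr rfl fun b hb => hold b ?_
            exact (h₂.root b hb).2.1
          have hXZ : Disjoint (R₁.biUnion (col p₁)) (col (attach p₂ R₁ v) v) := by
            rw [← hX, Finset.disjoint_biUnion_left]
            intro b hb
            have a₁ := h₁.root b hb
            have e : attach p₂ R₁ v b = v := by simp only [attach, hb, if_true]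
            have := hdisj (attach p₂ R₁ v) b (by omega)
            rwa [e, hold b (by omega)] at this
          have := card_gain (R₁.biUnion (col p₁)) (R₂.biUnion (col p₂))
            (col (attach p₂ R₁ v) v) m hXZ (hcard _ _ (by omega))
          rw [Finset.biUnion_insert, hY, Finset.union_biUnion, hX]
          linarith)
      rw [forestExp_linear, forestExp_const] at step
      have := ih (s + blockCount k) p₁ h₁.fresh (by omega)
      linarith
    have h := forestExp_mono hp key
    rw [forestExp_linear k s p (1 / 4) 1 (fun q R => ((R.biUnion (col q)).card : ℝ))
      (fun _ _ => (3 / 4 * ((m : ℝ) + k * m / 4) + m / 4)), forestExp_const] at h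
    have := ih s p hp (by omega)
    simp only [forestExp]
    push_cast
    linarith

/-! ### The graph of a parent function -/

/-- The block of vertex `x`: the last `d` vertices form the block `n`, the other ones are cut
into consecutive blocks of `m` vertices (the last one possibly smaller), numbered from `0`. -/
def blk (n d m : ℕ) (x : Fin n) : ℕ := if x.1 < n - d then x.1 / m else n

lemma blk_mono {n d m : ℕ} {x y : Fin n} (h : x ≤ y) : blk n d m x ≤ blk n d m y := by
  have h' : x.1 ≤ y.1 := h
  unfold blk
  split_ifs with h₁ h₂
  · exact Nat.div_le_div_right h'
  · exact (Nat.div_le_self _ _).trans x.2.le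
  · omega
  · exact le_rfl

/-- The graph in which two vertices are adjacent if their blocks are equal or one block is the
parent of the other. -/
def blockGraph (n d m : ℕ) (p : ℕ → ℕ) : SimpleGraph (Fin n) where
  Adj x y := x ≠ y ∧ (blk n d m x = blk n d m y ∨ p (blk n d m x) = blk n d m y ∨
    p (blk n d m y) = blk n d m x)
  symm := ⟨fun x y h => by
    obtain ⟨h₀, h⟩ := h
    exact ⟨h₀.symm, by tauto⟩⟩
  loopless := ⟨fun x h => h.1 rfl⟩

/-- If the later neighbors of every vertex form a clique, the graph is chordal: the two cycle
neighbors of the least vertex of a cycle are joined by a chord. -/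
lemma isChordal_of_later {n : ℕ} (G : SimpleGraph (Fin n))
    (h : ∀ u v w, u ≤ v → u ≤ w → G.Adj u v → G.Adj u w → v ≠ w → G.Adj v w) :
    G.IsChordal := by
  intro a c hc hlen
  obtain ⟨u, hu, hmin⟩ := Finset.exists_min_image c.support.toFinset id
    ⟨a, by simp⟩
  rw [List.mem_toFinset] at hu
  have hq := hc.rotate hu
  have hlq : 4 ≤ (c.rotate u hu).length := by simpa using hlen
  set q := c.rotate u hu with hqdef
  have hle : ∀ x ∈ q.support, u ≤ x := fun x hx =>
    hmin x (by simpa [hqdef] using hx)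
  have hnil := hq.not_nil
  have hadj : G.Adj q.snd q.penultimate :=
    h u _ _ (hle _ (q.getVert_mem_support _)) (hle _ (q.getVert_mem_support _))
      (q.adj_snd hnil) (q.adj_penultimate hnil).symm hq.snd_ne_penultimate
  refine ⟨q.snd, q.penultimate, ?_, ?_, hadj, ?_⟩
  · exact (c.mem_support_rotate_iff u hu).1 (q.getVert_mem_support 1)
  · exact (c.mem_support_rotate_iff u hu).1 (q.getVert_mem_support (q.length - 1))
  · intro he
    have he' : s(q.snd, q.penultimate) ∈ q.edges := (c.rotate_edges u hu).mem_iff.2 he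
    obtain ⟨i, hi, hie⟩ := (q.mk_mem_edges_iff_exists).1 he'
    have hinj : ∀ a b, 1 ≤ a → a ≤ q.length → 1 ≤ b → b ≤ q.length →
        q.getVert a = q.getVert b → a = b := fun a b h₁ h₂ h₃ h₄ h =>
      hq.getVert_injOn ⟨h₁, h₂⟩ ⟨h₃, h₄⟩ h
    -- The edge from position `0` also starts at position `q.length` of the closed walk.
    obtain ⟨j, hj₁, hj₂, hj, hjv⟩ : ∃ j, 1 ≤ j ∧ j ≤ q.length ∧
        (j = i ∨ i = 0 ∧ j = q.length) ∧ q.getVert i = q.getVert j := by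
      rcases Nat.eq_zero_or_pos i with rfl | h0
      · exact ⟨q.length, by omega, le_rfl, Or.inr ⟨rfl, rfl⟩, by simp⟩
      · exact ⟨i, h0, hi.le, Or.inl rfl, rfl⟩
    rw [hjv, Sym2.eq_iff] at hie
    rcases hie with ⟨e₁, e₂⟩ | ⟨e₁, e₂⟩
    · have := hinj j 1 hj₁ hj₂ le_rfl (by omega) e₁
      have := hinj (i + 1) (q.length - 1) (by omega) (by omega) (by omega) (by omega) e₂
      omega
    · have := hinj j (q.length - 1) hj₁ hj₂ (by omega) (by omega) e₁
      have := hinj (i + 1) 1 (by omega) (by omega) le_rfl (by omega) e₂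
      omega

lemma blockGraph_isChordal {n d m : ℕ} {p : ℕ → ℕ} (hp : ∀ b, b ≤ p b) :
    (blockGraph n d m p).IsChordal := by
  refine isChordal_of_later _ fun u v w huv huw hv hw hne => ⟨hne, ?_⟩
  have a₁ := blk_mono (d := d) (m := m) huv
  have a₂ := blk_mono (d := d) (m := m) huw
  have a₃ := hp (blk n d m v)
  have a₄ := hp (blk n d m w)
  have b₁ := hv.2
  have b₂ := hw.2
  have b₃ : blk n d m u = blk n d m v ∨ p (blk n d m u) = blk n d m v := by omega
  have b₄ : blk n d m u = blk n d m w ∨ p (blk n d m u) = blk n d m w := by omega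
  rcases b₃ with b₃ | b₃ <;> rcases b₄ with b₄ | b₄ <;> simp only [b₃, b₄] at * <;> omega

/-- Parity of the depth of block `b` in the forest given by `p`, for a parent function without
edges from blocks `≥ N`. -/
def depthParity (p : ℕ → ℕ) (N : ℕ) (b : ℕ) : ℕ :=
  if h : b < p b ∧ b < N then 1 - depthParity p N (p b) else 0
termination_by N - b

lemma depthParity_le (p : ℕ → ℕ) (N b : ℕ) : depthParity p N b ≤ 1 := by
  rw [depthParity]
  split_ifs <;> omega

lemma depthParity_parent {p : ℕ → ℕ} {N b : ℕ} (hp : Fresh N p) (hb : p b ≠ b) :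
    depthParity p N b = 1 - depthParity p N (p b) := by
  have hN : b < N := by
    by_contra h
    exact hb (hp.new b (by omega))
  have := hp.old b hN
  rw [depthParity, dif_pos ⟨by omega, hN⟩]

lemma blockGraph_chromaticNumber {n d m N : ℕ} {p : ℕ → ℕ} (hp : Fresh N p) (hN : N ≤ n)
    (hd : d ≤ n) (hm : 0 < m) (hmd : 2 * m ≤ d) :
    (blockGraph n d m p).chromaticNumber = d := by
  apply le_antisymm
  · rw [SimpleGraph.chromaticNumber_le_iff_colorable]
    have hlt : ∀ x : Fin n, (if x.1 < n - d then x.1 % m + m * depthParity p N (x.1 / m)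
        else x.1 - (n - d)) < d := by
      intro x
      split_ifs with h
      · have a₁ := Nat.mod_lt x.1 hm
        have a₂ := Nat.mul_le_mul_left m (depthParity_le p N (x.1 / m))
        omega
      · omega
    refine ⟨SimpleGraph.Coloring.mk (fun x => ⟨_, hlt x⟩) ?_⟩
    -- Blocks below `n` have their parents below `n`, so the last block is isolated.
    have hlast : ∀ b, b < n → p b < n := by
      intro b hb
      by_cases h : b < N
      · have := hp.old b h
        omega
      · rw [hp.new b (by omega)]
        exact hb
    have hpn : p n = n := hp.new n hN
    have hcross : ∀ a b : ℕ, p (a / m) = b / m → a / m ≠ b / m →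
        a % m + m * depthParity p N (a / m) ≠ b % m + m * depthParity p N (b / m) := by
      intro a b hab hne
      have a₁ := Nat.mod_lt a hm
      have a₂ := Nat.mod_lt b hm
      have a₃ := depthParity_parent hp (b := a / m) (by omega)
      have a₄ := depthParity_le p N (b / m)
      rw [hab] at a₃
      rw [a₃]
      have : depthParity p N (b / m) = 0 ∨ depthParity p N (b / m) = 1 := by omega
      rcases this with e | e <;> rw [e] <;> omega
    rintro x y ⟨hne, hxy⟩ heq
    have hne' : x.1 ≠ y.1 := fun h => hne (Fin.ext h)
    have heq' := congrArg Fin.val heq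
    simp only at heq'
    have hx : x.1 / m < n := (Nat.div_le_self _ _).trans_lt x.2
    have hy : y.1 / m < n := (Nat.div_le_self _ _).trans_lt y.2
    have hx' := hlast _ hx
    have hy' := hlast _ hy
    unfold blk at hxy
    split_ifs at heq' hxy with h₁ h₂ h₂
    · by_cases hb : x.1 / m = y.1 / m
      · rw [hb] at heq'
        have e₁ := Nat.div_add_mod x.1 m
        have e₂ := Nat.div_add_mod y.1 m
        rw [hb] at e₁
        omega
      · rcases hxy with h | h | h
        · exact hb h
        · exact hcross _ _ h hb heq'
        · exact hcross _ _ h (Ne.symm hb) heq'.symm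
    · omega
    · omega
    · omega
  · have hclique : (blockGraph n d m p).IsClique
        ((Finset.univ.filter fun x : Fin n => n - d ≤ x.1 : Finset (Fin n)) : Set (Fin n)) := by
      intro x hx y hy hne
      simp only [Finset.coe_filter, Finset.mem_univ, true_and, Set.mem_ofPred_eq] at hx hy
      refine ⟨hne, Or.inl ?_⟩
      simp only [blk, not_lt.2 hx, not_lt.2 hy, if_false]
    have hc : (Finset.univ.filter fun x : Fin n => n - d ≤ x.1).card = d := by
      have h := Fin.card_filter_val_lt (n := n) (m := n - d)
      have h' := Finset.card_filter_add_card_filter_not (s := (Finset.univ : Finset (Fin n)))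
        (fun x : Fin n => x.1 < n - d)
      simp only [not_lt, Finset.card_univ, Fintype.card_fin] at h'
      omega
    have := hclique.card_le_chromaticNumber
    rwa [hc] at this

/-! ### Online algorithms on block graphs -/

/-- The set of colors that `A` uses on block `b` of the graph with parent function `p`. -/
def blockColors {n : ℕ} (d m : ℕ) (A : Fin n → SimpleGraph (Fin n) → ℕ) (p : ℕ → ℕ) (b : ℕ) :
    Finset ℕ :=
  (Finset.univ.filter fun x => blk n d m x = b).image fun x => A x (blockGraph n d m p)

lemma le_card_blockColors {n d m M : ℕ} {A : Fin n → SimpleGraph (Fin n) → ℕ}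
    (hA : IsOnlineAlg A) (hm : 0 < m) (hM : m * M ≤ n - d) (p : ℕ → ℕ) (b : ℕ) (hb : b < M) :
    m ≤ (blockColors d m A p b).card := by
  unfold blockColors
  have hbm : m * b + m ≤ n - d := by
    calc m * b + m = m * (b + 1) := by ring
      _ ≤ m * M := Nat.mul_le_mul_left m hb
      _ ≤ n - d := hM
  rw [Finset.card_image_of_injOn]
  · let f : Fin m → Fin n := fun i => ⟨m * b + i.1, by have := i.2; omega⟩
    have hf : Function.Injective f := fun i j h => by
      have := congrArg Fin.val h
      simp only [f] at this
      exact Fin.ext (by omega)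
    calc m = (Finset.univ.image f).card := by
          rw [Finset.card_image_of_injective _ hf]; simp
      _ ≤ _ := Finset.card_le_card ?_
    intro x hx
    obtain ⟨i, -, rfl⟩ := Finset.mem_image.1 hx
    have hi := i.2
    have h₁ : m * b + i.1 < n - d := by omega
    rw [Finset.mem_filter]
    refine ⟨Finset.mem_univ _, ?_⟩
    simp only [blk, f, h₁, if_true]
    rw [Nat.mul_add_div hm, Nat.div_eq_of_lt hi, add_zero]
  · intro x hx y hy hxy
    by_contra hne
    simp only [Finset.coe_filter, Finset.mem_univ, true_and, Set.mem_ofPred_eq] at hx hy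
    exact hA.2 (blockGraph n d m p) x y ⟨hne, Or.inl (hx.trans hy.symm)⟩ hxy

lemma disjoint_blockColors {n d m : ℕ} {A : Fin n → SimpleGraph (Fin n) → ℕ}
    (hA : IsOnlineAlg A) (p : ℕ → ℕ) (b : ℕ) (hb : p b ≠ b) :
    Disjoint (blockColors d m A p b) (blockColors d m A p (p b)) := by
  rw [Finset.disjoint_left]
  intro c hc hc'
  simp only [blockColors, Finset.mem_image, Finset.mem_filter, Finset.mem_univ, true_and] at hc hc'
  obtain ⟨x, hx, rfl⟩ := hc
  obtain ⟨y, hy, hxy⟩ := hc'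
  refine hA.2 (blockGraph n d m p) x y ⟨?_, Or.inr (Or.inl ?_)⟩ hxy.symm
  · rintro rfl
    exact hb (hy.symm.trans hx)
  · rw [hx, hy]

lemma blockColors_online {n d m : ℕ} {A : Fin n → SimpleGraph (Fin n) → ℕ}
    (hA : IsOnlineAlg A) (p p' : ℕ → ℕ) (t : ℕ)
    (h : ∀ b b', b ≤ t → b' ≤ t → b ≠ b' → (p b = b' ↔ p' b = b')) :
    blockColors d m A p t = blockColors d m A p' t := by
  unfold blockColors
  refine Finset.image_congr fun x hx => ?_
  simp only [Finset.coe_filter, Finset.mem_univ, true_and, Set.mem_ofPred_eq] at hx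
  refine hA.1 x _ _ fun u v hu hv => ?_
  have hu' := (blk_mono (d := d) (m := m) hu).trans hx.le
  have hv' := (blk_mono (d := d) (m := m) hv).trans hx.le
  show _ ∧ _ ↔ _ ∧ _
  by_cases e : blk n d m u = blk n d m v
  · simp only [e, true_or]
  · rw [h _ _ hu' hv' e, h _ _ hv' hu' (Ne.symm e)]

lemma card_blockColors_le {n d m : ℕ} (A : Fin n → SimpleGraph (Fin n) → ℕ) (p : ℕ → ℕ)
    (R : Finset ℕ) :
    (R.biUnion (blockColors d m A p)).card ≤ colorsUsed A (blockGraph n d m p) := by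
  refine Finset.card_le_card ?_
  rw [Finset.biUnion_subset]
  exact fun b _ => Finset.image_subset_image (Finset.filter_subset _ _)

lemma blockCount_eq (k : ℕ) : blockCount k + 1 = 2 ^ (k + 1) := by
  induction k with
  | zero => rfl
  | succ k ih =>
    simp only [blockCount]
    rw [pow_succ]
    omega

/-- Yao's principle for the random block graph of level `k`. -/
lemma exists_blockGraph {n d m k : ℕ} (hm : 0 < m) (hk : m * blockCount k ≤ n - d)
    {ι : Type} (μ : PMF ι) (A : ι → Fin n → SimpleGraph (Fin n) → ℕ)
    (hA : ∀ i, IsOnlineAlg (A i)) :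
    ∃ p : ℕ → ℕ, Fresh (blockCount k) p ∧
      (m : ℝ) + k * m / 4
        ≤ ∑' i, (μ i).toReal * (colorsUsed (A i) (blockGraph n d m p) : ℝ) := by
  have hμ : HasSum (fun i => (μ i).toReal) 1 := by
    have h := ENNReal.hasSum_toReal μ.tsum_coe_ne_top
    rwa [← ENNReal.tsum_toReal_eq μ.apply_ne_top, μ.tsum_coe, ENNReal.toReal_one] at h
  have hsum : ∀ p : ℕ → ℕ, Summable fun i =>
      (μ i).toReal * (colorsUsed (A i) (blockGraph n d m p) : ℝ) := by
    intro p
    refine Summable.of_nonneg_of_le (fun i => by positivity) (fun i => ?_)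
      (hμ.summable.mul_right (n : ℝ))
    refine mul_le_mul_of_nonneg_left ?_ ENNReal.toReal_nonneg
    have : colorsUsed (A i) (blockGraph n d m p) ≤ n := by
      refine Finset.card_image_le.trans ?_
      simp
    exact_mod_cast this
  have hfresh : Fresh 0 (fun b => b) := ⟨fun _ _ => rfl, fun b hb => by omega⟩
  obtain ⟨p, R, ho, hle⟩ := exists_forestExp_le k 0 (fun b => b) (fun p _ =>
    ∑' i, (μ i).toReal * (colorsUsed (A i) (blockGraph n d m p) : ℝ)) hfresh
  refine ⟨p, by simpa using ho.fresh, le_trans ?_ hle⟩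
  have hs := hasSum_forestExp k 0 (fun b => b)
    (fun i p _ => (μ i).toReal * (colorsUsed (A i) (blockGraph n d m p) : ℝ)) _
    (fun p _ => (hsum p).hasSum)
  have hc := hμ.mul_right ((m : ℝ) + k * m / 4)
  rw [one_mul] at hc
  refine hasSum_le (fun i => ?_) hc hs
  have h₁ := forestExp_colors (blockColors d m (A i))
    (le_card_blockColors (hA i) hm hk) (disjoint_blockColors (hA i))
    (blockColors_online (hA i)) k 0 (fun b => b) hfresh (by omega)
  have h₂ := forestExp_mono (k := k) hfresh
    (F := fun q R => ((R.biUnion (blockColors d m (A i) q)).card : ℝ))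
    (G := fun q _ => (colorsUsed (A i) (blockGraph n d m q) : ℝ))
    (fun q R _ => by exact_mod_cast card_blockColors_le (A i) q R)
  have h₃ := forestExp_linear k 0 (fun b => b) (μ i).toReal 0
    (fun q _ => (colorsUsed (A i) (blockGraph n d m q) : ℝ)) (fun _ _ => 0)
  simp only [zero_mul, add_zero] at h₃
  rw [h₃]
  exact mul_le_mul_of_nonneg_left (h₁.trans h₂) ENNReal.toReal_nonneg

theorem rand_lower_bound_chordal :
    ∃ α : ℝ, 0 < α ∧
      ∀ (d : ℕ), 2 ≤ d →
        ∀ (n : ℕ), 12 * d ^ 2 ≤ n →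
          ∀ (ι : Type) [Countable ι] (μ : PMF ι)
            (A : ι → Fin n → SimpleGraph (Fin n) → ℕ),
            (∀ i, IsOnlineAlg (A i)) →
            ∃ G : SimpleGraph (Fin n), G.IsChordal ∧ G.chromaticNumber = d ∧
              α * d * Real.logb 2 n ≤ ∑' i, (μ i).toReal * (colorsUsed (A i) G : ℝ) := by
  refine ⟨1 / 24, by norm_num, fun d hd n hn ι _ μ A hA => ?_⟩
  have hdn : 24 * d ≤ n := by nlinarith
  have hlog : 1 ≤ Nat.log 2 (n / d) :=
    Nat.log_pos (by norm_num) ((Nat.le_div_iff_mul_le (by omega)).2 (by omega))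
  -- The largest level `k` with `d * 2 ^ (k + 1) ≤ n`.
  obtain ⟨k, hk⟩ : ∃ k, Nat.log 2 (n / d) = k + 1 := ⟨_, (Nat.sub_add_cancel hlog).symm⟩
  have hnd : n / d ≠ 0 := by
    have : 0 < n / d := Nat.div_pos (by omega) (by omega)
    omega
  have hlow : d * 2 ^ (k + 1) ≤ n := by
    have := Nat.pow_log_le_self 2 hnd
    rw [hk] at this
    calc d * 2 ^ (k + 1) ≤ d * (n / d) := Nat.mul_le_mul_left d this
      _ ≤ n := Nat.mul_div_le n d
  have hupp : n < d * 2 ^ (k + 2) := by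
    have := Nat.lt_pow_succ_log_self (b := 2) (by norm_num) (n / d)
    rw [hk] at this
    rw [mul_comm]
    exact (Nat.div_lt_iff_lt_mul (by omega)).1 this
  have hm : 0 < d / 2 := by omega
  have hblocks : d / 2 * blockCount k ≤ n - d := by
    have h₁ : d / 2 * blockCount k ≤ d / 2 * 2 ^ (k + 1) :=
      Nat.mul_le_mul_left _ (by have := blockCount_eq k; omega)
    have h₂ : 2 * (d / 2) * 2 ^ (k + 1) ≤ d * 2 ^ (k + 1) :=
      Nat.mul_le_mul_right _ (by omega)
    have h₃ : 2 * (d / 2 * 2 ^ (k + 1)) ≤ n := by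
      rw [← mul_assoc]; exact h₂.trans hlow
    omega
  obtain ⟨p, hp, hle⟩ := exists_blockGraph hm hblocks μ A hA
  refine ⟨blockGraph n d (d / 2) p, blockGraph_isChordal ?_,
    blockGraph_chromaticNumber hp ?_ (by omega) hm (by omega), le_trans ?_ hle⟩
  · intro b
    by_cases h : b < blockCount k
    · exact (hp.old b h).1
    · exact (hp.new b (by omega)).ge
  · have := Nat.le_mul_of_pos_left (blockCount k) hm
    omega
  -- As `d ^ 2 ≤ n`, squaring `hupp` gives `n < 4 ^ (k + 2)`.
  have h4 : n < 4 ^ (k + 2) := by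
    have e : (2 ^ (k + 2)) ^ 2 = 4 ^ (k + 2) := by
      rw [← pow_mul, mul_comm, pow_mul]; norm_num
    have h₁ : n * n < n * 4 ^ (k + 2) := by
      calc n * n < (d * 2 ^ (k + 2)) * (d * 2 ^ (k + 2)) := Nat.mul_self_lt_mul_self hupp
        _ = d ^ 2 * 4 ^ (k + 2) := by rw [← e]; ring
        _ ≤ n * 4 ^ (k + 2) := Nat.mul_le_mul_right _ (by omega)
    exact Nat.lt_of_mul_lt_mul_left h₁
  have hlogb : Real.logb 2 n ≤ 2 * ((k : ℝ) + 2) := by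
    rw [Real.logb_le_iff_le_rpow (by norm_num) (by exact_mod_cast (by omega : 0 < n))]
    have : (2 : ℝ) ^ (2 * ((k : ℝ) + 2)) = (4 : ℝ) ^ (k + 2) := by
      rw [Real.rpow_mul (by norm_num)]
      norm_num
      rw [← Real.rpow_natCast]
      norm_num
    rw [this]
    exact_mod_cast h4.le
  have hmd : (d : ℝ) ≤ 3 * ((d / 2 : ℕ) : ℝ) := by
    exact_mod_cast (by omega : d ≤ 3 * (d / 2))
  have hk0 : (0 : ℝ) ≤ k := k.cast_nonneg
  calc 1 / 24 * (d : ℝ) * Real.logb 2 n ≤ 1 / 24 * (d : ℝ) * (2 * ((k : ℝ) + 2)) := by gcongr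
    _ ≤ 1 / 24 * (3 * ((d / 2 : ℕ) : ℝ)) * (2 * ((k : ℝ) + 2)) := by gcongr
    _ ≤ ((d / 2 : ℕ) : ℝ) + k * ((d / 2 : ℕ) : ℝ) / 4 := by
      have : (0 : ℝ) ≤ ((d / 2 : ℕ) : ℝ) := Nat.cast_nonneg _
      linarith
end

section
/- There exists a constant α > 0 such that for every natural number n with n ≥ 48 and every randomized online coloring algorithm (ι, μ, (A i)) on n-vertex graphs, there exists a bipartite simple graph G on Fin n such that the expected number of colors used on G, namely ∑' i, (μ i)·(number of colors used by A i on G), is at least α·log n, where log is the base-2 logarithm. -/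
/-! ### Color sets of a block -/

/-- Colors that `A` gives, on input `G`, to the vertices `v` with `lo ≤ v < hi` and `c v = b`. -/
def sideColors {n : ℕ} (A : Fin n → SimpleGraph (Fin n) → ℕ) (G : SimpleGraph (Fin n))
    (c : Fin n → Bool) (lo hi : ℕ) (b : Bool) : Finset ℕ :=
  (Finset.univ.filter fun v : Fin n => lo ≤ v.val ∧ v.val < hi ∧ c v = b).image fun v => A v G

/-- The potential of the block `[lo, hi)`: the sum over both sides of `c` of the number of colors
used on that side of the block. -/
def pot {n : ℕ} (A : Fin n → SimpleGraph (Fin n) → ℕ) (G : SimpleGraph (Fin n))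
    (c : Fin n → Bool) (lo hi : ℕ) : ℕ :=
  (sideColors A G c lo hi true).card + (sideColors A G c lo hi false).card

lemma mem_sideColors {n : ℕ} {A : Fin n → SimpleGraph (Fin n) → ℕ} {G : SimpleGraph (Fin n)}
    {c : Fin n → Bool} {lo hi : ℕ} {b : Bool} {a : ℕ} :
    a ∈ sideColors A G c lo hi b ↔
      ∃ v : Fin n, (lo ≤ v.val ∧ v.val < hi ∧ c v = b) ∧ A v G = a := by
  simp [sideColors]

lemma card_sideColors_le {n : ℕ} (A : Fin n → SimpleGraph (Fin n) → ℕ) (G : SimpleGraph (Fin n))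
    (c : Fin n → Bool) (lo hi : ℕ) (b : Bool) :
    (sideColors A G c lo hi b).card ≤ colorsUsed A G :=
  Finset.card_le_card (Finset.image_subset_image (Finset.filter_subset _ _))

lemma colorsUsed_le {n : ℕ} (A : Fin n → SimpleGraph (Fin n) → ℕ) (G : SimpleGraph (Fin n)) :
    colorsUsed A G ≤ n := by
  simpa [colorsUsed] using Finset.card_image_le (s := Finset.univ) (f := fun v => A v G)

lemma pot_le {n : ℕ} (A : Fin n → SimpleGraph (Fin n) → ℕ) (G : SimpleGraph (Fin n))
    (c : Fin n → Bool) (lo hi : ℕ) : pot A G c lo hi ≤ 2 * colorsUsed A G := by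
  have h1 := card_sideColors_le A G c lo hi true
  have h2 := card_sideColors_le A G c lo hi false
  unfold pot
  omega

/-! ### Merging two blocks -/

lemma card_lt_union {P R : Finset ℕ} (h : P ≠ R) :
    P.card < (P ∪ R).card ∨ R.card < (P ∪ R).card := by
  by_contra! hc
  apply h
  rw [Finset.eq_of_subset_of_card_le Finset.subset_union_left hc.1]
  exact (Finset.eq_of_subset_of_card_le Finset.subset_union_right hc.2).symm

/-- The combinatorial core: the two ways of merging the color-set pairs `(P, Q)` and `(R, T)` gain
at least one color in total. Here `x` and `y` are the colors of the joining vertex. -/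
lemma card_merge (P Q R T : Finset ℕ) (x y : ℕ) (hx : x ∉ P ∪ R) (hy : y ∉ P ∪ T) :
    (P.card + Q.card) + (R.card + T.card) + 1 ≤
      ((P ∪ R).card + (insert x (Q ∪ T)).card) + ((P ∪ T).card + (insert y (Q ∪ R)).card) := by
  have l := fun X Y : Finset ℕ => Finset.card_le_card (Finset.subset_union_left (s₁ := X) (s₂ := Y))
  have r := fun X Y : Finset ℕ =>
    Finset.card_le_card (Finset.subset_union_right (s₁ := X) (s₂ := Y))
  have ix := Finset.card_le_card (Finset.subset_insert x (Q ∪ T))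
  have iy := Finset.card_le_card (Finset.subset_insert y (Q ∪ R))
  have := l P R; have := l P T; have := l Q R; have := l Q T
  have := r P R; have := r P T; have := r Q R; have := r Q T
  by_cases h1 : P = R
  · by_cases h2 : P = T
    · by_cases h3 : Q = R
      · subst h1 h2 h3
        simp only [Finset.union_self] at *
        rw [Finset.card_insert_of_notMem hx, Finset.card_insert_of_notMem hy]
        omega
      · rcases card_lt_union h3 with h | h <;> omega
    · rcases card_lt_union h2 with h | h <;> omega
  · rcases card_lt_union h1 with h | h <;> omega

/-- The bipartition after a merge: `c` with the block `[mid, hi)` flipped when `e` holds. The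
joining vertex `hi` lies on the side `false`. -/
def mergeSide {n : ℕ} (c : Fin n → Bool) (mid hi : ℕ) (e : Bool) (u : Fin n) : Bool :=
  if u.val < mid then c u else if u.val < hi then (c u ^^ e) else false

/-- The graph `G` with the vertex `x` joined to the `true` side of the block `[lo, x)`. -/
def joinVertex {n : ℕ} (G : SimpleGraph (Fin n)) (c : Fin n → Bool) (lo : ℕ) (x : Fin n) :
    SimpleGraph (Fin n) where
  Adj u w := G.Adj u w ∨ (u = x ∧ lo ≤ w.val ∧ w < x ∧ c w = true) ∨
    (w = x ∧ lo ≤ u.val ∧ u < x ∧ c u = true)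
  symm := ⟨fun u w h => by
    rcases h with h | h | h
    · exact Or.inl h.symm
    · exact Or.inr (Or.inr h)
    · exact Or.inr (Or.inl h)⟩
  loopless := ⟨fun u h => by
    rcases h with h | h | h
    · exact G.loopless.irrefl u h
    · exact absurd h.2.2.1 (by simp [h.1])
    · exact absurd h.2.2.1 (by simp [h.1])⟩

/-- The two possible merges of the blocks `[o, mid)` and `[mid, x)` by the vertex `x` have total
potential exceeding that of the two blocks by at least one. The coloring of `[o, mid)` may be read
off already from the graph `G₁` present before the second block arrives. -/
lemma pot_merge {n : ℕ} {A : Fin n → SimpleGraph (Fin n) → ℕ} (hA : IsOnlineAlg A)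
    {G₁ G₂ : SimpleGraph (Fin n)} {c₁ c₂ : Fin n → Bool} {o mid : ℕ} {x : Fin n}
    (hom : o ≤ mid) (hmx : mid ≤ x.val)
    (hG : ∀ u w : Fin n, u.val < mid → (G₂.Adj u w ↔ G₁.Adj u w))
    (hc : ∀ u : Fin n, u.val < mid → c₂ u = c₁ u) :
    pot A G₁ c₁ o mid + pot A G₂ c₂ mid x.val + 1 ≤
      pot A (joinVertex G₂ (mergeSide c₂ mid x.val false) o x)
        (mergeSide c₂ mid x.val false) o (x.val + 1) +
      pot A (joinVertex G₂ (mergeSide c₂ mid x.val true) o x)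
        (mergeSide c₂ mid x.val true) o (x.val + 1) := by
  have old2 : ∀ (e : Bool) (u : Fin n), u < x →
      A u (joinVertex G₂ (mergeSide c₂ mid x.val e) o x) = A u G₂ := by
    intro e u hu
    apply hA.1
    intro a b ha hb
    have h1 : a ≠ x := (lt_of_le_of_lt ha hu).ne
    have h2 : b ≠ x := (lt_of_le_of_lt hb hu).ne
    simp [joinVertex, h1, h2]
  have old1 : ∀ u : Fin n, u.val < mid → A u G₂ = A u G₁ := by
    intro u hu
    apply hA.1
    intro a b ha hb
    exact hG a b (lt_of_le_of_lt ha hu)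
  have sub1 : ∀ e b, sideColors A G₁ c₁ o mid b ⊆
      sideColors A (joinVertex G₂ (mergeSide c₂ mid x.val e) o x)
        (mergeSide c₂ mid x.val e) o (x.val + 1) b := by
    intro e b a ha
    rw [mem_sideColors] at ha ⊢
    obtain ⟨u, ⟨h1, h2, h3⟩, rfl⟩ := ha
    refine ⟨u, ⟨h1, by omega, ?_⟩, ?_⟩
    · simp [mergeSide, h2, hc u h2, h3]
    · rw [old2 e u (by rw [Fin.lt_def]; omega), old1 u h2]
  have sub2 : ∀ e b, sideColors A G₂ c₂ mid x.val (b ^^ e) ⊆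
      sideColors A (joinVertex G₂ (mergeSide c₂ mid x.val e) o x)
        (mergeSide c₂ mid x.val e) o (x.val + 1) b := by
    intro e b a ha
    rw [mem_sideColors] at ha ⊢
    obtain ⟨u, ⟨h1, h2, h3⟩, rfl⟩ := ha
    refine ⟨u, ⟨by omega, by omega, ?_⟩, old2 e u h2⟩
    simp [mergeSide, h2, h1.not_gt, h3]
  have new1 : ∀ e, A x (joinVertex G₂ (mergeSide c₂ mid x.val e) o x) ∈
      sideColors A (joinVertex G₂ (mergeSide c₂ mid x.val e) o x)
        (mergeSide c₂ mid x.val e) o (x.val + 1) false := by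
    intro e
    rw [mem_sideColors]
    exact ⟨x, ⟨by omega, by omega, by simp [mergeSide, hmx.not_gt]⟩, rfl⟩
  have new2 : ∀ e, A x (joinVertex G₂ (mergeSide c₂ mid x.val e) o x) ∉
      sideColors A (joinVertex G₂ (mergeSide c₂ mid x.val e) o x)
        (mergeSide c₂ mid x.val e) o (x.val + 1) true := by
    intro e h
    rw [mem_sideColors] at h
    obtain ⟨u, ⟨h1, h2, h3⟩, h4⟩ := h
    have hux : u < x := by
      rw [Fin.lt_def]
      by_contra hlt
      have : ¬ u.val < mid := by omega
      simp [mergeSide, this, hlt] at h3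
    exact hA.2 _ u x (Or.inr (Or.inr ⟨rfl, h1, hux, h3⟩)) h4
  have key := card_merge (sideColors A G₁ c₁ o mid true) (sideColors A G₁ c₁ o mid false)
    (sideColors A G₂ c₂ mid x.val true) (sideColors A G₂ c₂ mid x.val false)
    (A x (joinVertex G₂ (mergeSide c₂ mid x.val false) o x))
    (A x (joinVertex G₂ (mergeSide c₂ mid x.val true) o x))
    (fun h => new2 false (Finset.union_subset (sub1 false true) (sub2 false true) h))
    (fun h => new2 true (Finset.union_subset (sub1 true true) (sub2 true true) h))
  refine key.trans (Nat.add_le_add (Nat.add_le_add ?_ ?_) (Nat.add_le_add ?_ ?_)) <;>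
    apply Finset.card_le_card
  · exact Finset.union_subset (sub1 false true) (sub2 false true)
  · exact Finset.insert_subset (new1 false)
      (Finset.union_subset (sub1 false false) (sub2 false false))
  · exact Finset.union_subset (sub1 true true) (sub2 true true)
  · exact Finset.insert_subset (new1 true)
      (Finset.union_subset (sub1 true false) (sub2 true false))

/-! ### Averaging over the randomness of the algorithm -/

lemma summable_pmf {ι : Type} (μ : PMF ι) : Summable fun i => (μ i).toReal :=
  ENNReal.summable_toReal μ.tsum_coe_ne_top

lemma tsum_pmf {ι : Type} (μ : PMF ι) : ∑' i, (μ i).toReal = 1 := by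
  rw [← ENNReal.tsum_toReal_eq μ.apply_ne_top, μ.tsum_coe, ENNReal.toReal_one]

lemma summable_pmf_mul {ι : Type} (μ : PMF ι) (f : ι → ℕ) (M : ℕ) (hf : ∀ i, f i ≤ M) :
    Summable fun i => (μ i).toReal * (f i : ℝ) := by
  refine Summable.of_nonneg_of_le (fun i => by positivity) (fun i => ?_)
    ((summable_pmf μ).mul_right (M : ℝ))
  have : (f i : ℝ) ≤ M := by exact_mod_cast hf i
  gcongr

lemma summable_pot {n : ℕ} {ι : Type} (μ : PMF ι) (A : ι → Fin n → SimpleGraph (Fin n) → ℕ)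
    (G : SimpleGraph (Fin n)) (c : Fin n → Bool) (lo hi : ℕ) :
    Summable fun i => (μ i).toReal * (pot (A i) G c lo hi : ℝ) :=
  summable_pmf_mul μ _ (2 * n) fun i =>
    (pot_le _ _ _ _ _).trans (Nat.mul_le_mul_left 2 (colorsUsed_le _ _))

/-- Any bipartite graph on the vertices below `o` extends to one with a new block on
`[o, o + 2 ^ k - 1)`, not connected to the old vertices, of expected potential at least `k / 2`. -/
lemma exists_block {n : ℕ} {ι : Type} (μ : PMF ι) (A : ι → Fin n → SimpleGraph (Fin n) → ℕ)
    (hA : ∀ i, IsOnlineAlg (A i)) (k : ℕ) :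
    ∀ (o : ℕ), o + (2 ^ k - 1) ≤ n → ∀ (G₀ : SimpleGraph (Fin n)) (c₀ : Fin n → Bool),
      (∀ u w : Fin n, G₀.Adj u w → u.val < o) → (∀ u w, G₀.Adj u w → c₀ u ≠ c₀ w) →
      ∃ (G : SimpleGraph (Fin n)) (c : Fin n → Bool),
        (∀ u w : Fin n, G.Adj u w → u.val < o + (2 ^ k - 1)) ∧
        (∀ u w, G.Adj u w → c u ≠ c w) ∧
        (∀ u w : Fin n, u.val < o → (G.Adj u w ↔ G₀.Adj u w)) ∧
        (∀ u : Fin n, u.val < o → c u = c₀ u) ∧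
        (k : ℝ) / 2 ≤ ∑' i, (μ i).toReal * (pot (A i) G c o (o + (2 ^ k - 1)) : ℝ) := by
  induction k with
  | zero =>
    intro o _ G₀ c₀ h1 h2
    exact ⟨G₀, c₀, by simpa using h1, h2, by simp, by simp,
      by simpa using tsum_nonneg fun _ => by positivity⟩
  | succ k ih =>
    intro o ho G₀ c₀ e₀ p₀
    have h2k : 1 ≤ 2 ^ k := Nat.one_le_two_pow
    have hlast : o + (2 ^ k - 1) + (2 ^ k - 1) < n := by omega
    obtain ⟨G₁, c₁, e₁, p₁, a₁, s₁, b₁⟩ := ih o (by omega) G₀ c₀ e₀ p₀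
    obtain ⟨G₂, c₂, e₂, p₂, a₂, s₂, b₂⟩ := ih (o + (2 ^ k - 1)) (by omega) G₁ c₁ e₁ p₁
    set mid := o + (2 ^ k - 1) with hmid
    set x : Fin n := ⟨mid + (2 ^ k - 1), hlast⟩ with hx
    have hxv : x.val = mid + (2 ^ k - 1) := rfl
    rw [← hxv] at e₂ b₂
    have hend : o + (2 ^ (k + 1) - 1) = x.val + 1 := by omega
    rw [hend]
    have hom : o ≤ mid := by omega
    have hmx : mid ≤ x.val := by omega
    let c := fun e => mergeSide c₂ mid x.val e
    let G := fun e => joinVertex G₂ (c e) o x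
    -- Flipping the second block keeps the coloring proper, as no edge of `G₂` crosses `mid`.
    have hc₂ : ∀ e u w, G₂.Adj u w → c e u ≠ c e w := by
      intro e u w h
      have hu := e₂ u w h
      have hw := e₂ w u h.symm
      have hp := p₂ u w h
      have hiff : u.val < mid ↔ w.val < mid :=
        ⟨fun h' => e₁ w u ((a₂ u w h').1 h).symm,
          fun h' => e₁ u w ((a₂ w u h').1 h.symm).symm⟩
      by_cases h' : u.val < mid
      · simpa [c, mergeSide, h', hiff.1 h'] using hp
      · have h'' : ¬ w.val < mid := fun q => h' (hiff.2 q)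
        simpa [c, mergeSide, h', h'', hu, hw] using hp
    have hcx : ∀ e, c e x = false := fun e => by simp [c, mergeSide, hmx.not_gt]
    have rest : ∀ e, (∀ u w : Fin n, (G e).Adj u w → u.val < x.val + 1) ∧
        (∀ u w, (G e).Adj u w → c e u ≠ c e w) ∧
        (∀ u w : Fin n, u.val < o → ((G e).Adj u w ↔ G₀.Adj u w)) ∧
        (∀ u : Fin n, u.val < o → c e u = c₀ u) := by
      intro e
      refine ⟨?_, ?_, ?_, ?_⟩
      · rintro u w (h | ⟨rfl, -⟩ | ⟨-, -, h, -⟩)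
        · have := e₂ u w h
          omega
        · omega
        · rw [Fin.lt_def] at h
          omega
      · rintro u w (h | ⟨h, -, -, h'⟩ | ⟨h, -, -, h'⟩)
        · exact hc₂ e u w h
        · rw [h, hcx, h']
          simp
        · rw [h, hcx, h']
          simp
      · intro u w hu
        have hux : u ≠ x := fun q => by rw [q] at hu; omega
        have : (G e).Adj u w ↔ G₂.Adj u w := by
          simp [G, joinVertex, hux, hu.not_ge]
        rw [this, a₂ u w (by omega), a₁ u w hu]
      · intro u hu
        have : u.val < mid := by omega
        simp [c, mergeSide, this, s₂ u this, s₁ u hu]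
    have sum : (∑' i, (μ i).toReal * (pot (A i) G₁ c₁ o mid : ℝ)) +
        (∑' i, (μ i).toReal * (pot (A i) G₂ c₂ mid x.val : ℝ)) + 1 ≤
        (∑' i, (μ i).toReal * (pot (A i) (G false) (c false) o (x.val + 1) : ℝ)) +
        (∑' i, (μ i).toReal * (pot (A i) (G true) (c true) o (x.val + 1) : ℝ)) := by
      have S1 := summable_pot μ A G₁ c₁ o mid
      have S2 := summable_pot μ A G₂ c₂ mid x.val
      have S3 := summable_pot μ A (G false) (c false) o (x.val + 1)
      have S4 := summable_pot μ A (G true) (c true) o (x.val + 1)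
      rw [← tsum_pmf μ, ← S1.tsum_add S2, ← (S1.add S2).tsum_add (summable_pmf μ),
        ← S3.tsum_add S4]
      refine ((S1.add S2).add (summable_pmf μ)).tsum_le_tsum (fun i => ?_) (S3.add S4)
      have key := pot_merge (hA i) (x := x) hom hmx a₂ s₂
      have key' : (pot (A i) G₁ c₁ o mid : ℝ) + pot (A i) G₂ c₂ mid x.val + 1 ≤
          pot (A i) (G false) (c false) o (x.val + 1) +
          pot (A i) (G true) (c true) o (x.val + 1) := by exact_mod_cast key
      have := mul_le_mul_of_nonneg_left key' (ENNReal.toReal_nonneg (a := μ i))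
      linarith
    have : ∃ e, ((k + 1 : ℕ) : ℝ) / 2 ≤
        ∑' i, (μ i).toReal * (pot (A i) (G e) (c e) o (x.val + 1) : ℝ) := by
      by_contra! hcon
      have h1 := hcon false
      have h2 := hcon true
      push_cast at h1 h2
      linarith
    obtain ⟨e, he⟩ := this
    obtain ⟨r1, r2, r3, r4⟩ := rest e
    exact ⟨G e, c e, r1, r2, r3, r4, he⟩

theorem rand_lower_bound_bipartite :
    ∃ α : ℝ, 0 < α ∧
      ∀ (n : ℕ), 48 ≤ n →
        ∀ (ι : Type) [Countable ι] (μ : PMF ι)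
          (A : ι → Fin n → SimpleGraph (Fin n) → ℕ),
          (∀ i, IsOnlineAlg (A i)) →
          ∃ G : SimpleGraph (Fin n), G.Colorable 2 ∧
            α * Real.logb 2 n ≤ ∑' i, (μ i).toReal * (colorsUsed (A i) G : ℝ) := by
  refine ⟨1 / 8, by norm_num, ?_⟩
  intro n hn ι _ μ A hA
  -- The largest `k` for which a level-`k` block fits into `n` vertices.
  set k := Nat.log 2 (n + 1) with hk
  have hk1 : 2 ^ k ≤ n + 1 := Nat.pow_log_le_self 2 (by omega)
  have hk2 : n + 1 < 2 ^ (k + 1) := Nat.lt_pow_succ_log_self (by norm_num) _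
  have hk3 : 1 ≤ k := Nat.log_pos (by norm_num) (by omega)
  obtain ⟨G, c, -, hc, -, -, hb⟩ := exists_block μ A hA k 0 (by omega) ⊥ (fun _ => false)
    (by simp) (by simp)
  refine ⟨G, ?_, ?_⟩
  · have := (SimpleGraph.Coloring.mk c fun {u w} h => hc u w h).colorable
    simpa using this
  · have hlog : Real.logb 2 n ≤ k + 1 := by
      rw [Real.logb_le_iff_le_rpow (by norm_num) (by positivity)]
      have : (n : ℝ) ≤ 2 ^ (k + 1) := by exact_mod_cast (by omega : n ≤ 2 ^ (k + 1))
      exact_mod_cast this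
    have hk3' : (1 : ℝ) ≤ k := by exact_mod_cast hk3
    have hS : Summable fun i => (μ i).toReal * (colorsUsed (A i) G : ℝ) :=
      summable_pmf_mul μ _ n fun i => colorsUsed_le _ _
    have hle : ∑' i, (μ i).toReal * (pot (A i) G c 0 (0 + (2 ^ k - 1)) : ℝ) ≤
        2 * ∑' i, (μ i).toReal * (colorsUsed (A i) G : ℝ) := by
      rw [← tsum_mul_left]
      refine (summable_pot μ A G c _ _).tsum_le_tsum (fun i => ?_) (hS.mul_left 2)
      have h : (pot (A i) G c 0 (0 + (2 ^ k - 1)) : ℝ) ≤ 2 * colorsUsed (A i) G := by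
        exact_mod_cast pot_le _ _ _ _ _
      have := mul_le_mul_of_nonneg_left h (ENNReal.toReal_nonneg (a := μ i))
      linarith
    linarith
end
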